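/- arXiv:2407.11413 — 5 statements merged into one kernel-verified Lean document; each statement's English description precedes it below -/
import Mathlib

section
/- Fix T > 0 and t₀ ∈ ℝ and define μ(t) = 1/(T + t₀ − t) for t ∈ [t₀, t₀ + T). Let α̃ : [1/T, ∞) → [0,∞) be continuous and let σ_s : [1/T, ∞) → (0,∞) be differentiable with σ_s'(s) ≤ s⁻²·σ_s(s)·α̃(s)/2 for all s ≥ 1/T. Let V : [t₀, t₀ + T) → [0,∞) be differentiable and g : [t₀, t₀ + T) → [0,∞) be such that V'(t) ≤ −α̃(μ(t))·V(t) + g(t) for all t ∈ [t₀, t₀ + T). Then the changed Lyapunov function W(t) = σ_s(μ(t))·V(t) is differentiable and satisfies W'(t) ≤ −(α̃(μ(t))/2)·W(t) + σ_s(μ(t))·g(t) for all t ∈ [t₀, t₀ + T). -/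
open Set

/-- **Changing-Lyapunov-function step** in the proof of Theorem 1: if
`V'(t) ≤ -α̃(μ(t))·V(t) + g(t)` and `σ_s'(s) ≤ s⁻²·σ_s(s)·α̃(s)/2`, then
`W(t) = σ_s(μ(t))·V(t)` is differentiable with
`W'(t) ≤ -(α̃(μ(t))/2)·W(t) + σ_s(μ(t))·g(t)`. -/
theorem changing_lyapunov_function
    (T t₀ : ℝ) (hT : 0 < T)
    (μ : ℝ → ℝ) (hμ : ∀ t, μ t = 1 / (T + t₀ - t))
    (tα : ℝ → ℝ)
    (htαcont : ContinuousOn tα (Ici (1 / T)))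
    (htαnonneg : ∀ s, 1 / T ≤ s → 0 ≤ tα s)
    (σs σs' : ℝ → ℝ)
    (hσspos : ∀ s, 1 / T ≤ s → 0 < σs s)
    (hσsderiv : ∀ s, 1 / T ≤ s → HasDerivAt σs (σs' s) s)
    (hσs' : ∀ s, 1 / T ≤ s → σs' s ≤ s⁻¹ ^ 2 * σs s * tα s / 2)
    (V V' g : ℝ → ℝ)
    (hVnonneg : ∀ t ∈ Ico t₀ (t₀ + T), 0 ≤ V t)
    (hVderiv : ∀ t ∈ Ico t₀ (t₀ + T), HasDerivAt V (V' t) t)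
    (hgnonneg : ∀ t ∈ Ico t₀ (t₀ + T), 0 ≤ g t)
    (hVineq : ∀ t ∈ Ico t₀ (t₀ + T), V' t ≤ -tα (μ t) * V t + g t) :
    ∀ t ∈ Ico t₀ (t₀ + T), ∃ W' : ℝ,
      HasDerivAt (fun t => σs (μ t) * V t) W' t ∧
      W' ≤ -(tα (μ t) / 2) * (σs (μ t) * V t) + σs (μ t) * g t := by
  intro t ht
  have hd : 0 < T + t₀ - t := by linarith [ht.2]
  have hμpos : 0 < μ t := by rw [hμ]; positivity
  have hμge : 1 / T ≤ μ t := by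
    rw [hμ]
    exact one_div_le_one_div_of_le hd (by linarith [ht.1])
  have hμd : HasDerivAt μ (μ t ^ 2) t := by
    have h1 : HasDerivAt (fun x : ℝ => T + t₀ - x) (-1) t := by
      simpa using (hasDerivAt_id t).const_sub (T + t₀)
    have h2 := h1.fun_inv hd.ne'
    have h3 : μ = fun x : ℝ => (T + t₀ - x)⁻¹ := by
      funext x
      rw [hμ, one_div]
    have h4 : -(-1) / (T + t₀ - t) ^ 2 = μ t ^ 2 := by
      rw [hμ, div_pow]
      norm_num
    rw [h4] at h2
    rw [← h3] at h2
    exact h2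
  have hW := ((hσsderiv (μ t) hμge).comp t hμd).mul (hVderiv t ht)
  refine ⟨_, hW, ?_⟩
  have hV := hVnonneg t ht
  have hs := hσspos _ hμge
  have key : σs' (μ t) * μ t ^ 2 ≤ σs (μ t) * tα (μ t) / 2 := by
    have h := mul_le_mul_of_nonneg_right (hσs' _ hμge) (sq_nonneg (μ t))
    have e : (μ t)⁻¹ ^ 2 * σs (μ t) * tα (μ t) / 2 * μ t ^ 2
        = σs (μ t) * tα (μ t) / 2 := by
      field_simp
    rwa [e] at h
  have k1 := mul_le_mul_of_nonneg_right key hV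
  have k2 := mul_le_mul_of_nonneg_left (hVineq t ht) hs.le
  simp only [Function.comp_apply]
  linarith
end

section
/- Fix T > 0, t₀ ∈ ℝ and c > 0, and define μ(t) = 1/(T + t₀ − t) for t ∈ [t₀, t₀ + T). Let α : (0,∞) → (0,∞) be differentiable with α'(s) ≤ (c/2)·s⁻²·α(s)² for all s > 0. Then for every t ∈ [t₀, t₀ + T): α(μ(t))·exp(−c·∫_{t₀}^{t} α(μ(τ)) dτ) ≤ α(μ(t₀))·exp(−(c/2)·∫_{t₀}^{t} α(μ(τ)) dτ). -/
open Set

/-- **Inequality (41)** in the proof of Theorem 3: if `α'(s) ≤ (c/2)·s⁻²·α(s)²`, then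
the factor `α(μ(t))` can be absorbed at the cost of halving the exponential decay rate:
`α(μ(t))·exp(-c·∫_{t₀}^t α(μ(τ)) dτ) ≤ α(μ(t₀))·exp(-(c/2)·∫_{t₀}^t α(μ(τ)) dτ)`. -/
theorem gain_absorption_inequality
    (T t₀ c : ℝ) (hT : 0 < T) (hc : 0 < c)
    (μ : ℝ → ℝ) (hμ : ∀ t, μ t = 1 / (T + t₀ - t))
    (α α' : ℝ → ℝ)
    (hαpos : ∀ s, 0 < s → 0 < α s)
    (hαderiv : ∀ s, 0 < s → HasDerivAt α (α' s) s)
    (hα' : ∀ s, 0 < s → α' s ≤ c / 2 * s⁻¹ ^ 2 * α s ^ 2) :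
    ∀ t ∈ Ico t₀ (t₀ + T),
      α (μ t) * Real.exp (-c * ∫ τ in t₀..t, α (μ τ)) ≤
        α (μ t₀) * Real.exp (-(c / 2) * ∫ τ in t₀..t, α (μ τ)) := by
  intro t ht
  have hpos : ∀ x, x < T + t₀ → 0 < μ x := fun x hx => by
    rw [hμ]; exact one_div_pos.mpr (by linarith)
  have hμd : ∀ x, x < T + t₀ → HasDerivAt μ (μ x ^ 2) x := by
    intro x hx
    have hne : T + t₀ - x ≠ 0 := by linarith
    have h1 : HasDerivAt (fun y : ℝ => T + t₀ - y) (-1) x := by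
      simpa using (hasDerivAt_id x).const_sub (T + t₀)
    have h2 := h1.fun_inv hne
    have h3 : μ = fun y => (T + t₀ - y)⁻¹ := by
      funext y; rw [hμ, one_div]
    rw [h3]
    have h4 : (T + t₀ - x)⁻¹ ^ 2 = - -1 / (T + t₀ - x) ^ 2 := by simp
    exact h2.congr_deriv h4.symm
  have hg : ∀ x, x < T + t₀ → HasDerivAt (fun y => α (μ y)) (α' (μ x) * μ x ^ 2) x :=
    fun x hx => (hαderiv _ (hpos x hx)).comp x (hμd x hx)
  have hcont : ContinuousOn (fun y => α (μ y)) (Iio (T + t₀)) :=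
    fun x hx => (hg x hx).continuousAt.continuousWithinAt
  have hI : ∀ x, t₀ ≤ x → x < T + t₀ →
      HasDerivAt (fun u => ∫ τ in t₀..u, α (μ τ)) (α (μ x)) x := by
    intro x hx0 hx
    apply intervalIntegral.integral_hasDerivAt_right
    · apply ContinuousOn.intervalIntegrable
      apply hcont.mono
      intro y hy
      rw [uIcc_of_le hx0] at hy
      exact lt_of_le_of_lt hy.2 hx
    · exact hcont.stronglyMeasurableAtFilter isOpen_Iio x hx
    · exact (hg x hx).continuousAt
  have hh : ∀ x, t₀ ≤ x → x < T + t₀ →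
      HasDerivAt (fun u => α (μ u) * Real.exp (-(c / 2) * ∫ τ in t₀..u, α (μ τ)))
        (α' (μ x) * μ x ^ 2 * Real.exp (-(c / 2) * ∫ τ in t₀..x, α (μ τ)) +
          α (μ x) * (Real.exp (-(c / 2) * ∫ τ in t₀..x, α (μ τ)) * (-(c / 2) * α (μ x)))) x :=
    fun x hx0 hx => (hg x hx).mul (((hI x hx0 hx).const_mul (-(c / 2))).exp)
  have hanti : AntitoneOn
      (fun u => α (μ u) * Real.exp (-(c / 2) * ∫ τ in t₀..u, α (μ τ))) (Ico t₀ (T + t₀)) := by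
    apply antitoneOn_of_deriv_nonpos (convex_Ico _ _)
    · exact fun x hx => (hh x hx.1 hx.2).continuousAt.continuousWithinAt
    · rw [interior_Ico]
      exact fun x hx => (hh x hx.1.le hx.2).differentiableAt.differentiableWithinAt
    · rw [interior_Ico]
      intro x hx
      rw [(hh x hx.1.le hx.2).deriv]
      have hp := hpos x hx.2
      have h1 : α' (μ x) * μ x ^ 2 ≤ c / 2 * α (μ x) ^ 2 := by
        have := mul_le_mul_of_nonneg_right (hα' _ hp) (sq_nonneg (μ x))
        calc _ ≤ _ := this
          _ = _ := by field_simp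
      have h2 := mul_le_mul_of_nonneg_right h1
        (Real.exp_pos (-(c / 2) * ∫ τ in t₀..x, α (μ τ))).le
      linarith
  have hle := hanti (a := t₀) ⟨le_rfl, by linarith⟩ (b := t) ⟨ht.1, by linarith [ht.2]⟩ ht.1
  simp only [intervalIntegral.integral_same, mul_zero, Real.exp_zero, mul_one] at hle
  have he : Real.exp (-c * ∫ τ in t₀..t, α (μ τ)) =
      Real.exp (-(c / 2) * ∫ τ in t₀..t, α (μ τ)) *
        Real.exp (-(c / 2) * ∫ τ in t₀..t, α (μ τ)) := by
    rw [← Real.exp_add]; congr 1; ring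
  rw [he, ← mul_assoc]
  exact mul_le_mul_of_nonneg_right hle (Real.exp_pos _).le
end

section
/- Fix T > 0, t₀ ∈ ℝ and define μ(t) = 1/(T + t₀ − t) for t ∈ [t₀, t₀ + T). Let α_ξ : (0,∞) → (0,∞) be differentiable with α_ξ'(s) ≤ s⁻²·α_ξ(s)² for all s > 0. Let σ' > 0, set σ = (3 + σ')/2, let C ≥ 0, and let U : [t₀, t₀ + T) → [0,∞) be differentiable with U'(t) ≤ −(2σ − 1)·α_ξ(μ(t))·U(t) + (α_ξ(μ(t)))⁻¹·C/2 for all t ∈ [t₀, t₀ + T). Then for every t ∈ [t₀, t₀ + T): α_ξ(μ(t))²·U(t) ≤ exp(−σ'·∫_{t₀}^{t} α_ξ(μ(τ)) dτ)·α_ξ(μ(t₀))²·U(t₀) + C/(2σ'). -/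
open Set

/-- **Parameter-estimator estimate** (proof of Lemma 3, adaptive DPTCO): rescaling the
estimator Lyapunov function `U` by `α_ξ(μ(t))²` and using `μ̇ = μ²` with the growth
bound on `α_ξ` yields
`α_ξ(μ(t))²·U(t) ≤ exp(-σ'·∫_{t₀}^t α_ξ(μ(τ)) dτ)·α_ξ(μ(t₀))²·U(t₀) + C/(2σ')`. -/
theorem adaptive_estimator_bound
    (T t₀ : ℝ) (hT : 0 < T)
    (μ : ℝ → ℝ) (hμ : ∀ t, μ t = 1 / (T + t₀ - t))
    (αξ αξ' : ℝ → ℝ)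
    (hαξpos : ∀ s, 0 < s → 0 < αξ s)
    (hαξderiv : ∀ s, 0 < s → HasDerivAt αξ (αξ' s) s)
    (hαξ' : ∀ s, 0 < s → αξ' s ≤ s⁻¹ ^ 2 * αξ s ^ 2)
    (σ' σ : ℝ) (hσ' : 0 < σ') (hσ : σ = (3 + σ') / 2)
    (C : ℝ) (hC : 0 ≤ C)
    (U U' : ℝ → ℝ)
    (hUnonneg : ∀ t ∈ Ico t₀ (t₀ + T), 0 ≤ U t)
    (hUderiv : ∀ t ∈ Ico t₀ (t₀ + T), HasDerivAt U (U' t) t)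
    (hUineq : ∀ t ∈ Ico t₀ (t₀ + T),
      U' t ≤ -(2 * σ - 1) * αξ (μ t) * U t + (αξ (μ t))⁻¹ * C / 2) :
    ∀ t ∈ Ico t₀ (t₀ + T),
      αξ (μ t) ^ 2 * U t ≤
        Real.exp (-σ' * ∫ τ in t₀..t, αξ (μ τ)) * (αξ (μ t₀) ^ 2 * U t₀) +
          C / (2 * σ') := by
  have hmpos : ∀ t, t < t₀ + T → 0 < μ t := by
    intro t ht
    rw [hμ]
    have : 0 < T + t₀ - t := by linarith
    positivity
  have hμd : ∀ t, t < t₀ + T → HasDerivAt μ (μ t ^ 2) t := by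
    intro t ht
    have h0 : T + t₀ - t ≠ 0 := by
      have : 0 < T + t₀ - t := by linarith
      exact this.ne'
    have h1 : HasDerivAt (fun x : ℝ => T + t₀ - x) (-1) t := by
      simpa using (hasDerivAt_id t).const_sub (T + t₀)
    have h2 := h1.fun_inv h0
    have he : μ = fun x => (T + t₀ - x)⁻¹ := by
      funext x
      rw [hμ, one_div]
    have e2 : - (-1) / (T + t₀ - t) ^ 2 = μ t ^ 2 := by
      rw [hμ]
      simp
    rw [e2] at h2
    rw [← he] at h2
    exact h2
  have had : ∀ t, t < t₀ + T →
      HasDerivAt (fun x => αξ (μ x)) (αξ' (μ t) * μ t ^ 2) t := by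
    intro t ht
    exact (hαξderiv _ (hmpos t ht)).comp t (hμd t ht)
  have hale : ∀ t, t < t₀ + T → αξ' (μ t) * μ t ^ 2 ≤ αξ (μ t) ^ 2 := by
    intro t ht
    have hp := hmpos t ht
    have h := mul_le_mul_of_nonneg_right (hαξ' _ hp) (sq_nonneg (μ t))
    have e : (μ t)⁻¹ ^ 2 * αξ (μ t) ^ 2 * μ t ^ 2 = αξ (μ t) ^ 2 := by
      field_simp
    linarith
  have hcont : ContinuousOn (fun x => αξ (μ x)) (Iio (t₀ + T)) :=
    fun x hx => (had x hx).continuousAt.continuousWithinAt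
  have hI : ∀ t ∈ Ico t₀ (t₀ + T),
      HasDerivAt (fun x => ∫ τ in t₀..x, αξ (μ τ)) (αξ (μ t)) t := by
    intro t ht
    apply intervalIntegral.integral_hasDerivAt_right
    · apply ContinuousOn.intervalIntegrable
      apply hcont.mono
      rw [uIcc_of_le ht.1]
      exact fun x hx => lt_of_le_of_lt hx.2 ht.2
    · exact hcont.stronglyMeasurableAtFilter isOpen_Iio t ht.2
    · exact (had t ht.2).continuousAt
  have hW : ∀ t ∈ Ico t₀ (t₀ + T), ∃ d, d ≤ 0 ∧
      HasDerivAt (fun x => Real.exp (σ' * ∫ τ in t₀..x, αξ (μ τ)) *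
        (αξ (μ x) ^ 2 * U x - C / (2 * σ'))) d t := by
    intro t ht
    have h1 := ((hI t ht).const_mul σ').exp
    have h2 := (((had t ht.2).fun_pow 2).fun_mul (hUderiv t ht)).sub_const (C / (2 * σ'))
    refine ⟨_, ?_, h1.fun_mul h2⟩
    have hu := hUineq t ht
    have hl := hale t ht.2
    have hn := hUnonneg t ht
    have hp := hαξpos _ (hmpos t ht.2)
    generalize αξ' (μ t) * μ t ^ 2 = b at *
    generalize αξ (μ t) = a at *
    have hE := Real.exp_pos (σ' * ∫ τ in t₀..t, αξ (μ τ))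
    generalize Real.exp (σ' * ∫ τ in t₀..t, αξ (μ τ)) = E at *
    have k1 : a ^ 2 * U' t ≤ -(2 + σ') * a ^ 3 * U t + a * C / 2 := by
      have := mul_le_mul_of_nonneg_left hu (sq_nonneg a)
      have e : a ^ 2 * (-(2 * σ - 1) * a * U t + a⁻¹ * C / 2)
          = -(2 + σ') * a ^ 3 * U t + a * C / 2 := by
        subst hσ
        field_simp
        ring
      linarith
    have k2 : 2 * a * b * U t ≤ 2 * a ^ 3 * U t := by
      have := mul_le_mul_of_nonneg_left hl (by positivity : 0 ≤ 2 * a * U t)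
      nlinarith
    have k3 : σ' * a * (a ^ 2 * U t - C / (2 * σ')) = σ' * a ^ 3 * U t - a * C / 2 := by
      field_simp
    have k4 : σ' * a * (a ^ 2 * U t - C / (2 * σ')) + (2 * a * b * U t + a ^ 2 * U' t) ≤ 0 := by
      rw [k3]
      linarith
    have k5 := mul_nonpos_of_nonneg_of_nonpos hE.le k4
    refine le_of_eq_of_le ?_ k5
    push_cast
    ring
  intro t ht
  have hsub : ∀ x ∈ Icc t₀ t, x ∈ Ico t₀ (t₀ + T) :=
    fun x hx => ⟨hx.1, lt_of_le_of_lt hx.2 ht.2⟩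
  have hanti := antitoneOn_of_deriv_nonpos (convex_Icc t₀ t)
    (f := fun x => Real.exp (σ' * ∫ τ in t₀..x, αξ (μ τ)) *
        (αξ (μ x) ^ 2 * U x - C / (2 * σ')))
    (fun x hx => by
      obtain ⟨d, _, h⟩ := hW x (hsub x hx)
      exact h.continuousAt.continuousWithinAt)
    (fun x hx => by
      obtain ⟨d, _, h⟩ := hW x (hsub x (interior_subset hx))
      exact h.differentiableAt.differentiableWithinAt)
    (fun x hx => by
      obtain ⟨d, hd, h⟩ := hW x (hsub x (interior_subset hx))
      rw [h.deriv]
      exact hd)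
  have hf := hanti (left_mem_Icc.2 ht.1) (right_mem_Icc.2 ht.1) ht.1
  simp only [intervalIntegral.integral_same, mul_zero, Real.exp_zero, one_mul] at hf
  rw [neg_mul, Real.exp_neg]
  have hE := Real.exp_pos (σ' * ∫ τ in t₀..t, αξ (μ τ))
  generalize Real.exp (σ' * ∫ τ in t₀..t, αξ (μ τ)) = E at *
  have hc : 0 ≤ C / (2 * σ') := by positivity
  have h3 : αξ (μ t) ^ 2 * U t - C / (2 * σ') ≤ E⁻¹ * (αξ (μ t₀) ^ 2 * U t₀) := by
    rw [inv_mul_eq_div, le_div_iff₀ hE]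
    linarith
  linarith
end

section
/- Fix T > 0, t₀ ∈ ℝ and define μ(t) = 1/(T + t₀ − t) for t ∈ [t₀, t₀ + T). Let v₁ > 0, v₂ > 0, 0 ≤ v₃ ≤ v₂, B ≥ 0, and let α_x : (0,∞) → (0,∞) be differentiable, nondecreasing, with α_x'(s) ≤ (v₁/(2v₂))·s⁻²·α_x(s)² for all s > 0; define δ_x(s) = α_x'(s)·s²/α_x(s). Let V : [t₀, t₀ + T) → [0,∞) be differentiable with V'(t) ≤ (−v₁·α_x(μ(t)) + v₃·δ_x(μ(t)) + 2)·V(t) + B·exp(−v₁·∫_{t₀}^{t} α_x(μ(s)) ds) for all t ∈ [t₀, t₀ + T). Then for every t ∈ [t₀, t₀ + T): V(t) ≤ (V(t₀) + B·T)·exp(2T)·exp(−(v₁/2)·∫_{t₀}^{t} α_x(μ(s)) ds). -/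
open Set

/-- **Central comparison estimate** in the proof of Lemma 1 (robust DPTCO for
chain-integrator systems): if
`V'(t) ≤ (-v₁·α_x(μ(t)) + v₃·δ_x(μ(t)) + 2)·V(t) + B·exp(-v₁·∫_{t₀}^t α_x(μ))`
with `δ_x(s) = α_x'(s)·s²/α_x(s)`, `0 ≤ v₃ ≤ v₂` and
`α_x'(s) ≤ (v₁/(2v₂))·s⁻²·α_x(s)²`, then
`V(t) ≤ (V(t₀) + B·T)·exp(2T)·exp(-(v₁/2)·∫_{t₀}^t α_x(μ))`. -/
theorem chain_integrator_comparison_estimate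
    (T t₀ : ℝ) (hT : 0 < T)
    (μ : ℝ → ℝ) (hμ : ∀ t, μ t = 1 / (T + t₀ - t))
    (v₁ v₂ v₃ B : ℝ) (hv₁ : 0 < v₁) (hv₂ : 0 < v₂)
    (hv₃0 : 0 ≤ v₃) (hv₃ : v₃ ≤ v₂) (hB : 0 ≤ B)
    (αx αx' : ℝ → ℝ)
    (hαxpos : ∀ s, 0 < s → 0 < αx s)
    (hαxderiv : ∀ s, 0 < s → HasDerivAt αx (αx' s) s)
    (hαxmono : MonotoneOn αx (Ioi (0 : ℝ)))
    (hαx' : ∀ s, 0 < s → αx' s ≤ v₁ / (2 * v₂) * s⁻¹ ^ 2 * αx s ^ 2)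
    (δx : ℝ → ℝ) (hδx : ∀ s, δx s = αx' s * s ^ 2 / αx s)
    (V V' : ℝ → ℝ)
    (hVnonneg : ∀ t ∈ Ico t₀ (t₀ + T), 0 ≤ V t)
    (hVderiv : ∀ t ∈ Ico t₀ (t₀ + T), HasDerivAt V (V' t) t)
    (hVineq : ∀ t ∈ Ico t₀ (t₀ + T),
      V' t ≤ (-v₁ * αx (μ t) + v₃ * δx (μ t) + 2) * V t +
        B * Real.exp (-v₁ * ∫ s in t₀..t, αx (μ s))) :
    ∀ t ∈ Ico t₀ (t₀ + T),
      V t ≤ (V t₀ + B * T) * Real.exp (2 * T) *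
        Real.exp (-(v₁ / 2) * ∫ s in t₀..t, αx (μ s)) := by
  have hμpos : ∀ t ∈ Iio (t₀ + T), 0 < μ t := by
    intro t ht
    rw [hμ]
    have : t < t₀ + T := ht
    apply one_div_pos.2
    linarith
  have hcont : ContinuousOn (fun s => αx (μ s)) (Iio (t₀ + T)) := by
    intro t ht
    have h1 : ContinuousAt αx (μ t) := (hαxderiv _ (hμpos t ht)).continuousAt
    have h2 : ContinuousAt μ t := by
      have : μ = fun t => 1 / (T + t₀ - t) := funext hμ
      rw [this]
      have hlt : t < t₀ + T := ht
      have hne : T + t₀ - t ≠ 0 := by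
        intro h
        linarith
      exact ContinuousAt.div continuousAt_const (by fun_prop) hne
    exact (ContinuousAt.comp (f := μ) (g := αx) h1 h2).continuousWithinAt
  have hA : ∀ t ∈ Ico t₀ (t₀ + T),
      HasDerivAt (fun t => ∫ s in t₀..t, αx (μ s)) (αx (μ t)) t := by
    intro t ht
    apply intervalIntegral.integral_hasDerivAt_right
    · apply ContinuousOn.intervalIntegrable
      apply hcont.mono
      rw [uIcc_of_le ht.1]
      intro x hx
      exact lt_of_le_of_lt hx.2 ht.2
    · exact hcont.stronglyMeasurableAtFilter isOpen_Iio t ht.2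
    · exact hcont.continuousAt (isOpen_Iio.mem_nhds ht.2)
  have hApos : ∀ t ∈ Ico t₀ (t₀ + T), 0 ≤ ∫ s in t₀..t, αx (μ s) := by
    intro t ht
    apply intervalIntegral.integral_nonneg ht.1
    intro u hu
    exact (hαxpos _ (hμpos u (lt_of_le_of_lt hu.2 ht.2))).le
  set A : ℝ → ℝ := fun t => ∫ s in t₀..t, αx (μ s) with hAdef
  have hW : ∀ t ∈ Ico t₀ (t₀ + T), HasDerivAt
      (fun t => V t * Real.exp (v₁ / 2 * A t - 2 * (t - t₀)) - B * (t - t₀))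
      (V' t * Real.exp (v₁ / 2 * A t - 2 * (t - t₀)) +
        V t * (Real.exp (v₁ / 2 * A t - 2 * (t - t₀)) * (v₁ / 2 * αx (μ t) - 2 * 1)) - B * 1) t := by
    intro t ht
    have hid : HasDerivAt (fun t : ℝ => t - t₀) 1 t := (hasDerivAt_id t).sub_const t₀
    exact ((hVderiv t ht).mul
      ((((hA t ht).const_mul (v₁ / 2)).sub (hid.const_mul 2)).exp)).sub (hid.const_mul B)
  have hle : ∀ t ∈ Ico t₀ (t₀ + T),
      V' t * Real.exp (v₁ / 2 * A t - 2 * (t - t₀)) +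
        V t * (Real.exp (v₁ / 2 * A t - 2 * (t - t₀)) * (v₁ / 2 * αx (μ t) - 2 * 1)) - B * 1 ≤ 0 := by
    intro t ht
    have hm := hμpos t ht.2
    have ha := hαxpos _ hm
    have hδ : δx (μ t) ≤ v₁ / (2 * v₂) * αx (μ t) := by
      rw [hδx, div_le_iff₀ ha]
      calc αx' (μ t) * μ t ^ 2
          ≤ (v₁ / (2 * v₂) * (μ t)⁻¹ ^ 2 * αx (μ t) ^ 2) * μ t ^ 2 :=
            mul_le_mul_of_nonneg_right (hαx' _ hm) (by positivity)
        _ = v₁ / (2 * v₂) * αx (μ t) * αx (μ t) := by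
            field_simp
    have hvδ : v₃ * δx (μ t) ≤ v₁ / 2 * αx (μ t) := by
      calc v₃ * δx (μ t) ≤ v₃ * (v₁ / (2 * v₂) * αx (μ t)) :=
            mul_le_mul_of_nonneg_left hδ hv₃0
        _ ≤ v₂ * (v₁ / (2 * v₂) * αx (μ t)) :=
            mul_le_mul_of_nonneg_right hv₃ (by positivity)
        _ = v₁ / 2 * αx (μ t) := by field_simp
    have h1 : V' t + V t * (v₁ / 2 * αx (μ t) - 2) ≤ B * Real.exp (-v₁ * A t) := by
      have := hVineq t ht
      have h2 := mul_le_mul_of_nonneg_right hvδ (hVnonneg t ht)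
      have h3 : V' t ≤ (-v₁ * αx (μ t) + v₃ * δx (μ t) + 2) * V t +
        B * Real.exp (-v₁ * A t) := this
      nlinarith
    have h4 := mul_le_mul_of_nonneg_right h1
      (Real.exp_pos (v₁ / 2 * A t - 2 * (t - t₀))).le
    have h5 : B * Real.exp (-v₁ * A t) * Real.exp (v₁ / 2 * A t - 2 * (t - t₀)) ≤ B := by
      rw [mul_assoc, ← Real.exp_add]
      apply mul_le_of_le_one_right hB
      apply Real.exp_le_one_iff.2
      have h6 : 0 ≤ v₁ * A t := mul_nonneg hv₁.le (hApos t ht)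
      have h7 := ht.1
      linarith
    linarith
  have hanti : AntitoneOn
      (fun t => V t * Real.exp (v₁ / 2 * A t - 2 * (t - t₀)) - B * (t - t₀))
      (Ico t₀ (t₀ + T)) := by
    apply antitoneOn_of_deriv_nonpos (convex_Ico _ _)
    · intro t ht
      exact (hW t ht).continuousAt.continuousWithinAt
    · intro t ht
      exact (hW t (interior_subset ht)).differentiableAt.differentiableWithinAt
    · intro t ht
      rw [(hW t (interior_subset ht)).deriv]
      exact hle t (interior_subset ht)
  intro t ht
  have h0 : t₀ ∈ Ico t₀ (t₀ + T) := ⟨le_refl _, by linarith⟩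
  have hfin := hanti h0 ht ht.1
  have hA0 : A t₀ = 0 := by simp [hAdef]
  simp only [hA0, sub_self, mul_zero, Real.exp_zero, mul_one, sub_zero] at hfin
  have hV0 := hVnonneg t₀ h0
  have htT : t - t₀ ≤ T := by linarith [ht.2]
  have h8 : V t * Real.exp (v₁ / 2 * A t - 2 * (t - t₀)) ≤ V t₀ + B * T := by
    have := mul_le_mul_of_nonneg_left htT hB
    linarith
  have h9 : V t = V t * Real.exp (v₁ / 2 * A t - 2 * (t - t₀)) *
      (Real.exp (2 * (t - t₀)) * Real.exp (-(v₁ / 2) * A t)) := by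
    rw [mul_assoc, ← Real.exp_add, ← Real.exp_add]
    ring_nf
    simp
  change V t ≤ (V t₀ + B * T) * Real.exp (2 * T) * Real.exp (-(v₁ / 2) * A t)
  rw [h9, mul_assoc (V t₀ + B * T)]
  have hBT : 0 ≤ V t₀ + B * T := by positivity
  apply mul_le_mul h8 _ (by positivity) hBT
  apply mul_le_mul_of_nonneg_right _ (Real.exp_pos _).le
  apply Real.exp_le_exp.2
  linarith
end

section
/- Fix T > 0, t₀ ∈ ℝ and define μ(t) = 1/(T + t₀ − t) for t ∈ [t₀, t₀ + T). Let α̃ : [1/T, ∞) → [0,∞) be continuous and let σ_s : [1/T, ∞) → (0,∞) be differentiable with σ_s'(s) ≤ s⁻²·σ_s(s)·α̃(s)/2 for all s ≥ 1/T. Let M ≥ 0 and let V : [t₀, t₀ + T) → [0,∞) be differentiable and g : [t₀, t₀ + T) → [0,∞) continuous with V'(t) ≤ −α̃(μ(t))·V(t) + g(t) and σ_s(μ(t))·g(t) ≤ (M/2)·α̃(μ(t)) for all t ∈ [t₀, t₀ + T). Then for every t ∈ [t₀, t₀ + T): V(t) ≤ (σ_s(μ(t₀))·V(t₀) + M) /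 σ_s(μ(t)). In particular, if σ_s(s) → ∞ as s → ∞, then V(t) → 0 as t → t₀ + T. -/
open Set Filter

/-- **Analytic core of Theorem 1** (changing Lyapunov function + comparison): if
`V' ≤ -α̃(μ)·V + g` with `σ_s'(s) ≤ s⁻²·σ_s(s)·α̃(s)/2` and
`σ_s(μ(t))·g(t) ≤ (M/2)·α̃(μ(t))`, then
`V(t) ≤ (σ_s(μ(t₀))·V(t₀) + M)/σ_s(μ(t))`; in particular, if `σ_s(s) → ∞` as
`s → ∞`, then `V(t) → 0` as `t → t₀ + T` within the prescribed-time interval. -/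
theorem changed_lyapunov_boundedness_and_convergence
    (T t₀ : ℝ) (hT : 0 < T)
    (μ : ℝ → ℝ) (hμ : ∀ t, μ t = 1 / (T + t₀ - t))
    (tα : ℝ → ℝ)
    (htαcont : ContinuousOn tα (Ici (1 / T)))
    (htαnonneg : ∀ s, 1 / T ≤ s → 0 ≤ tα s)
    (σs σs' : ℝ → ℝ)
    (hσspos : ∀ s, 1 / T ≤ s → 0 < σs s)
    (hσsderiv : ∀ s, 1 / T ≤ s → HasDerivAt σs (σs' s) s)
    (hσs' : ∀ s, 1 / T ≤ s → σs' s ≤ s⁻¹ ^ 2 * σs s * tα s / 2)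
    (M : ℝ) (hM : 0 ≤ M)
    (V V' g : ℝ → ℝ)
    (hVnonneg : ∀ t ∈ Ico t₀ (t₀ + T), 0 ≤ V t)
    (hVderiv : ∀ t ∈ Ico t₀ (t₀ + T), HasDerivAt V (V' t) t)
    (hgcont : ContinuousOn g (Ico t₀ (t₀ + T)))
    (hgnonneg : ∀ t ∈ Ico t₀ (t₀ + T), 0 ≤ g t)
    (hVineq : ∀ t ∈ Ico t₀ (t₀ + T), V' t ≤ -tα (μ t) * V t + g t)
    (hdom : ∀ t ∈ Ico t₀ (t₀ + T), σs (μ t) * g t ≤ M / 2 * tα (μ t)) :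
    (∀ t ∈ Ico t₀ (t₀ + T), V t ≤ (σs (μ t₀) * V t₀ + M) / σs (μ t)) ∧
    (Tendsto σs atTop atTop →
      Tendsto V (nhdsWithin (t₀ + T) (Ico t₀ (t₀ + T))) (nhds 0)) := by
  have hμge : ∀ t ∈ Ico t₀ (t₀ + T), 1 / T ≤ μ t := by
    intro t ht
    rw [hμ]
    exact one_div_le_one_div_of_le (by linarith [ht.2]) (by linarith [ht.1])
  have hWd : ∀ t ∈ Ico t₀ (t₀ + T), HasDerivAt (fun t => σs (μ t) * V t)
      (σs' (μ t) * (μ t) ^ 2 * V t + σs (μ t) * V' t) t := by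
    intro t ht
    have hne : T + t₀ - t ≠ 0 := ne_of_gt (by linarith [ht.2])
    have h1 : HasDerivAt μ ((μ t) ^ 2) t := by
      have h2 : HasDerivAt (fun t => (T + t₀ - t)⁻¹) (-(-1) / (T + t₀ - t) ^ 2) t :=
        ((hasDerivAt_id t).const_sub (T + t₀)).inv hne
      have h3 : μ = fun t => (T + t₀ - t)⁻¹ := by
        funext x
        rw [hμ, one_div]
      rw [h3]
      convert h2 using 1
      field_simp
    exact ((hσsderiv _ (hμge t ht)).comp t h1).mul (hVderiv t ht)
  have hWle : ∀ t ∈ Ico t₀ (t₀ + T), M ≤ σs (μ t) * V t →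
      σs' (μ t) * (μ t) ^ 2 * V t + σs (μ t) * V' t ≤ 0 := by
    intro t ht hMW
    have hm := hμge t ht
    have hmpos : 0 < μ t := lt_of_lt_of_le (by positivity) hm
    have hs := hσspos _ hm
    have ha := htαnonneg _ hm
    have hV := hVnonneg t ht
    have e1 : σs' (μ t) * (μ t) ^ 2 * V t ≤ σs (μ t) * tα (μ t) / 2 * V t := by
      have := mul_le_mul_of_nonneg_right (hσs' _ hm) (by positivity : 0 ≤ (μ t) ^ 2 * V t)
      calc _ = σs' (μ t) * ((μ t) ^ 2 * V t) := by ring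
        _ ≤ _ := this
        _ = _ := by field_simp
    have e2 := mul_le_mul_of_nonneg_left (hVineq t ht) hs.le
    have e3 := hdom t ht
    have e4 := mul_le_mul_of_nonneg_left hMW ha
    nlinarith
  have h0 : t₀ ∈ Ico t₀ (t₀ + T) := ⟨le_rfl, by linarith⟩
  have hW0 : 0 ≤ σs (μ t₀) * V t₀ := mul_nonneg (hσspos _ (hμge _ h0)).le (hVnonneg _ h0)
  have key : ∀ t ∈ Ico t₀ (t₀ + T), σs (μ t) * V t ≤ σs (μ t₀) * V t₀ + M := by
    intro t ht
    have hsub : ∀ x ∈ Icc t₀ t, x ∈ Ico t₀ (t₀ + T) := fun x hx => ⟨hx.1, hx.2.trans_lt ht.2⟩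
    refine le_of_forall_pos_le_add fun ε hε => ?_
    have hδ : 0 < ε / T := by positivity
    have hb := image_le_of_deriv_right_lt_deriv_boundary' (a := t₀) (b := t)
      (f := fun t => σs (μ t) * V t)
      (f' := fun t => σs' (μ t) * (μ t) ^ 2 * V t + σs (μ t) * V' t)
      (B := fun x => σs (μ t₀) * V t₀ + M + ε / T * (x - t₀)) (B' := fun _ => ε / T)
      (fun x hx => (hWd x (hsub x hx)).continuousAt.continuousWithinAt)
      (fun x hx => (hWd x (hsub x ⟨hx.1, hx.2.le⟩)).hasDerivWithinAt)
      (by simpa using hM)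
      (by fun_prop)
      (fun x hx => by
        have := (((hasDerivAt_id x).sub_const t₀).const_mul (ε / T)).const_add
          (σs (μ t₀) * V t₀ + M)
        simpa using this.hasDerivWithinAt)
      (fun x hx hfx => by
        have hx' := hsub x ⟨hx.1, hx.2.le⟩
        refine (hWle x hx' ?_).trans_lt hδ
        have : 0 ≤ ε / T * (x - t₀) := mul_nonneg hδ.le (by linarith [hx.1])
        linarith)
      (⟨ht.1, le_rfl⟩ : t ∈ Icc t₀ t)
    have h5 : ε / T * (t - t₀) ≤ ε := by
      calc _ ≤ ε / T * T := mul_le_mul_of_nonneg_left (by linarith [ht.2]) hδ.le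
        _ = ε := by field_simp
    linarith
  have key2 : ∀ t ∈ Ico t₀ (t₀ + T), V t ≤ (σs (μ t₀) * V t₀ + M) / σs (μ t) := by
    intro t ht
    rw [le_div_iff₀ (hσspos _ (hμge t ht)), mul_comm]
    exact key t ht
  refine ⟨key2, fun hσ => ?_⟩
  have hμt : Tendsto μ (nhdsWithin (t₀ + T) (Ico t₀ (t₀ + T))) atTop := by
    have h3 : μ = fun t => (T + t₀ - t)⁻¹ := by
      funext x
      rw [hμ, one_div]
    rw [h3]
    refine tendsto_inv_nhdsGT_zero.comp (tendsto_nhdsWithin_iff.2 ⟨?_, ?_⟩)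
    · have : Continuous fun t : ℝ => T + t₀ - t := by fun_prop
      have h := this.tendsto (t₀ + T)
      rw [show T + t₀ - (t₀ + T) = 0 by ring] at h
      exact h.mono_left nhdsWithin_le_nhds
    · filter_upwards [self_mem_nhdsWithin] with t ht
      exact mem_Ioi.2 (by linarith [ht.2])
  refine tendsto_of_tendsto_of_tendsto_of_le_of_le' tendsto_const_nhds
    ((hσ.comp hμt).const_div_atTop (σs (μ t₀) * V t₀ + M)) ?_ ?_
  · filter_upwards [self_mem_nhdsWithin] with t ht using hVnonneg t ht
  · filter_upwards [self_mem_nhdsWithin] with t ht using key2 t ht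
end
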